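/- arXiv:2509.05137 — 2 statements merged into one kernel-verified Lean document; each statement's English description precedes it below -/
import Mathlib

section
/- Let f : [0,1] → [0,1] be continuous, strictly monotonically increasing, with f(0) = 0. Then there exists a monotone function g : ℕ → ℕ such that: (i) C_g is realizably PAC learnable with sample complexity m(ε,δ) ≤ log(1/δ)·g(1/ε); (ii) C_g is not adaptively additively f-robustly learnable, and there is an adaptive additive adversary that is a universal f-adversary for C_g; (iii) C_g is not adaptively subtractively f-robustly learnable, and there is an adaptive subtractive adversary that is a universal f-adversary for C_g. -/
open scoped ENNReal NNReal

/-- Total variation distance between two discrete distributions. -/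
noncomputable def tv {X : Type*} (p q : PMF X) : ℝ :=
  (∑' x, |(p x).toReal - (q x).toReal|) / 2

/-- The distribution of an i.i.d. sample of size `m` from `p`, viewed as a multiset. -/
noncomputable def iid {X : Type*} (p : PMF X) : ℕ → PMF (Multiset X)
  | 0 => PMF.pure 0
  | n + 1 => (iid p n).bind fun s => p.map fun x => x ::ₘ s

/-- `|Q|^m` : first draw `q ∼ Q`, then an i.i.d. sample `S ∼ q^m`. -/
noncomputable def metaSample {X : Type*} (Q : PMF (PMF X)) (m : ℕ) : PMF (Multiset X) :=
  Q.bind fun q => iid q m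

/-- An adaptive adversary: a randomized map from samples (finite multisets) to samples. -/
abbrev Adversary (X : Type*) := Multiset X → PMF (Multiset X)

/-- `V(P)`: the distribution of `V S` for `S ∼ P` (including internal randomness). -/
noncomputable def advPush {X : Type*} (V : Adversary X) (P : PMF (Multiset X)) :
    PMF (Multiset X) := P.bind V

/-- An additive adversary only adds points: `S ⊆ V(S)` almost surely. -/
def IsAdditive {X : Type*} (V : Adversary X) : Prop :=
  ∀ S T, T ∈ (V S).support → S ≤ T

/-- A subtractive adversary only removes points: `V(S) ⊆ S` almost surely. -/
def IsSubtractive {X : Type*} (V : Adversary X) : Prop :=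
  ∀ S T, T ∈ (V S).support → T ≤ S

/-- Fixed constant budget `η`: `|V(S)|` depends only on `|S|` (via `c`), and for every `m`,
`η m − 1 < m·budget(V,m) ≤ η m` where `m·budget(V,m) = ||V(S)| − |S||`. -/
def FixedBudget {X : Type*} (V : Adversary X) (η : ℝ) : Prop :=
  ∃ c : ℕ → ℕ, (∀ S T, T ∈ (V S).support → Multiset.card T = c (Multiset.card S)) ∧
    ∀ m : ℕ, η * m - 1 < |(c m : ℝ) - m| ∧ |(c m : ℝ) - m| ≤ η * m

/-- Fixed constant budget `η` for an additive adversary (`m·budget(V,m) = |V(S)| − |S|`). -/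
def FixedBudgetAdd {X : Type*} (V : Adversary X) (η : ℝ) : Prop :=
  ∃ c : ℕ → ℕ, (∀ S T, T ∈ (V S).support → Multiset.card T = c (Multiset.card S)) ∧
    ∀ m : ℕ, η * m - 1 < (c m : ℝ) - m ∧ (c m : ℝ) - m ≤ η * m

/-- Fixed constant budget `η` for a subtractive adversary (`m·budget(V,m) = |S| − |V(S)|`). -/
def FixedBudgetSub {X : Type*} (V : Adversary X) (η : ℝ) : Prop :=
  ∃ c : ℕ → ℕ, (∀ S T, T ∈ (V S).support → Multiset.card T = c (Multiset.card S)) ∧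
    ∀ m : ℕ, η * m - 1 < (m : ℝ) - c m ∧ (m : ℝ) - c m ≤ η * m

/-- Probability of an event under a discrete distribution. -/
noncomputable def probEvent {β : Type*} (P : PMF β) (E : Set β) : ℝ≥0∞ :=
  P.toOuterMeasure E

/-- `A` with sample complexity `mc` learns the class `C` against adversary `V`,
up to error `bound + ε` with confidence `1 − δ` once `m ≥ mc ε δ`. -/
def RobustLearnerFor {X : Type*} (C : Set (PMF X)) (A : Multiset X → PMF X)
    (mc : ℝ → ℝ → ℕ) (V : Adversary X) (bound : ℝ) : Prop :=
  ∀ p ∈ C, ∀ ε δ : ℝ, 0 < ε → ε < 1 → 0 < δ → δ < 1 →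
    ∀ m : ℕ, mc ε δ ≤ m →
      1 - ENNReal.ofReal δ ≤
        probEvent ((iid p m).bind V) {T | tv (A T) p ≤ bound + ε}

/-- `C` is adaptively α-robustly learnable w.r.t. the single adversary `V` with budget `η`. -/
def RobustlyLearnableWrt {X : Type*} (C : Set (PMF X)) (α : ℝ)
    (V : Adversary X) (η : ℝ) : Prop :=
  ∃ A mc, RobustLearnerFor C A mc V (α * η)

/-- `V` (with budget `η`) is a universal α-adversary for `C`. -/
def UniversalAdversary {X : Type*} (C : Set (PMF X)) (α : ℝ)
    (V : Adversary X) (η : ℝ) : Prop :=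
  ¬ RobustlyLearnableWrt C α V η

/-- `C` is adaptively α-robustly learnable w.r.t. a class `𝒱` of adversaries
(each given with its budget). -/
def RobustlyLearnableWrtClass {X : Type*} (C : Set (PMF X)) (α : ℝ)
    (𝒱 : Set (Adversary X × ℝ)) : Prop :=
  ∃ A mc, ∀ Vη ∈ 𝒱, RobustLearnerFor C A mc Vη.1 (α * Vη.2)

/-- `C` is adaptively additively α-robustly learnable: one learner works simultaneously
against all additive adaptive adversaries with fixed constant budgets. -/
def AdditivelyRobustlyLearnable {X : Type*} (C : Set (PMF X)) (α : ℝ) : Prop :=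
  ∃ A mc, ∀ V : Adversary X, ∀ η : ℝ, 0 < η → η < 1 →
    IsAdditive V → FixedBudgetAdd V η → RobustLearnerFor C A mc V (α * η)

/-- `C` is adaptively subtractively α-robustly learnable. -/
def SubtractivelyRobustlyLearnable {X : Type*} (C : Set (PMF X)) (α : ℝ) : Prop :=
  ∃ A mc, ∀ V : Adversary X, ∀ η : ℝ, 0 < η → η < 1 →
    IsSubtractive V → FixedBudgetSub V η → RobustLearnerFor C A mc V (α * η)

/-- The pair `(V1, V2)` successfully `(γ,ζ)`-confuses `C`-generated samples of size `m`. -/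
def ConfusesPair {X : Type*} (C : Set (PMF X)) (V1 V2 : Adversary X)
    (γ ζ : ℝ) (m : ℕ) : Prop :=
  ∃ p ∈ C, ∃ Q : PMF (PMF X), Q.support ⊆ C ∧
    (∀ q ∈ Q.support, γ < tv p q) ∧
    tv (advPush V1 (metaSample Q m)) (advPush V2 (iid p m)) < ζ

/-- A single adversary `V` successfully `(γ,ζ)`-confuses `C`-generated samples of size `m`. -/
def Confuses {X : Type*} (C : Set (PMF X)) (V : Adversary X) (γ ζ : ℝ) (m : ℕ) : Prop :=
  ConfusesPair C V V γ ζ m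

/-- `p` is the distribution `p_{i,j,k} = (1 − 1/j)·δ_{(0,0)} + (1/j − 1/k)·U_{B_i×{2j+1}}
 + (1/k)·δ_{(i,2j+2)}` on `ℕ × ℕ`. -/
def IsPijk (B : ℕ → Finset ℕ) (i j k : ℕ) (p : PMF (ℕ × ℕ)) : Prop :=
  ∀ x : ℕ × ℕ,
    p x = (1 - ((j : ℝ≥0∞))⁻¹) * (if x = (0, 0) then 1 else 0)
      + (((j : ℝ≥0∞))⁻¹ - ((k : ℝ≥0∞))⁻¹) *
          (if x.1 ∈ B i ∧ x.2 = 2 * j + 1 then (((B i).card : ℝ≥0∞))⁻¹ else 0)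
      + ((k : ℝ≥0∞))⁻¹ * (if x = (i, 2 * j + 2) then 1 else 0)

/-- The class `C_g = {p_{i,j,g(j)} : i, j ∈ ℕ}` (for the meaningful parameters). -/
def Cg (B : ℕ → Finset ℕ) (g : ℕ → ℕ) : Set (PMF (ℕ × ℕ)) :=
  {p | ∃ i j : ℕ, 1 ≤ j ∧ j < g j ∧ (B i).Nonempty ∧ IsPijk B i j (g j) p}

/-- `g` is superlinear: `g(n)/n → ∞`. -/
def Superlinear (g : ℕ → ℕ) : Prop :=
  Filter.Tendsto (fun n => (g n : ℝ) / n) Filter.atTop Filter.atTop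

/-- `C` is f-robustly learnable w.r.t. the single adversary `V` with budget `η`. -/
def FRobustlyLearnableWrt {X : Type*} (C : Set (PMF X)) (f : ℝ → ℝ)
    (V : Adversary X) (η : ℝ) : Prop :=
  ∃ A mc, RobustLearnerFor C A mc V (f η)

/-- `C` is f-robustly learnable w.r.t. a class `𝒱` of adversaries (each with its budget). -/
def FRobustlyLearnableWrtClass {X : Type*} (C : Set (PMF X)) (f : ℝ → ℝ)
    (𝒱 : Set (Adversary X × ℝ)) : Prop :=
  ∃ A mc, ∀ Vη ∈ 𝒱, RobustLearnerFor C A mc Vη.1 (f Vη.2)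

/-- `C` is adaptively additively f-robustly learnable. -/
def AdditivelyFRobustlyLearnable {X : Type*} (C : Set (PMF X)) (f : ℝ → ℝ) : Prop :=
  ∃ A mc, ∀ V : Adversary X, ∀ η : ℝ, 0 < η → η < 1 →
    IsAdditive V → FixedBudgetAdd V η → RobustLearnerFor C A mc V (f η)

/-- `C` is adaptively subtractively f-robustly learnable. -/
def SubtractivelyFRobustlyLearnable {X : Type*} (C : Set (PMF X)) (f : ℝ → ℝ) : Prop :=
  ∃ A mc, ∀ V : Adversary X, ∀ η : ℝ, 0 < η → η < 1 →
    IsSubtractive V → FixedBudgetSub V η → RobustLearnerFor C A mc V (f η)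

section Helpers

lemma pmf_summable {X : Type*} (p : PMF X) : Summable fun x => (p x).toReal :=
  ENNReal.summable_toReal p.tsum_coe_ne_top

lemma pmf_diff_summable {X : Type*} (p q : PMF X) :
    Summable fun x => |(p x).toReal - (q x).toReal| :=
  ((pmf_summable p).sub (pmf_summable q)).abs

lemma tv_self {X : Type*} (p : PMF X) : tv p p = 0 := by simp [tv]

lemma tv_triangle {X : Type*} (a p q : PMF X) : tv p q ≤ tv a p + tv a q := by
  unfold tv
  rw [← add_div, ← (pmf_diff_summable a p).tsum_add (pmf_diff_summable a q)]
  apply div_le_div_of_nonneg_right _ (by norm_num)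
  apply Summable.tsum_le_tsum _ (pmf_diff_summable p q)
    ((pmf_diff_summable a p).add (pmf_diff_summable a q))
  intro x
  rw [abs_sub_comm (a x).toReal (p x).toReal]
  exact abs_sub_le _ _ _

lemma pmf_bind_tsum {α β : Type*} (p : PMF α) (q : α → PMF β) (F : β → ℝ≥0∞) :
    ∑' b, (p.bind q) b * F b = ∑' a, p a * ∑' b, q a b * F b := by
  simp only [PMF.bind_apply, ← ENNReal.tsum_mul_right, ← ENNReal.tsum_mul_left]
  rw [ENNReal.tsum_comm]
  simp only [mul_assoc]

lemma pmf_pure_tsum {α : Type*} (a : α) (F : α → ℝ≥0∞) :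
    ∑' b, (PMF.pure a) b * F b = F a := by
  classical
  rw [tsum_eq_single a]
  · simp
  · intro b hb; simp [PMF.pure_apply, hb]

lemma pmf_map_tsum {α β : Type*} (p : PMF α) (g : α → β) (F : β → ℝ≥0∞) :
    ∑' b, (p.map g) b * F b = ∑' a, p a * F (g a) := by
  rw [PMF.map, pmf_bind_tsum]
  simp only [Function.comp, pmf_pure_tsum]

lemma iid_succ_tsum {X : Type*} (p : PMF X) (n : ℕ) (F : Multiset X → ℝ≥0∞) :
    ∑' s, iid p (n+1) s * F s = ∑' s, iid p n s * ∑' x, p x * F (x ::ₘ s) := by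
  simp only [iid, pmf_bind_tsum, pmf_map_tsum]

lemma outer_eq_tsum {α : Type*} (p : PMF α) (E : Set α) [DecidablePred (· ∈ E)] :
    p.toOuterMeasure E = ∑' a, p a * (if a ∈ E then 1 else 0) := by
  rw [PMF.toOuterMeasure_apply]
  apply tsum_congr; intro a
  by_cases h : a ∈ E <;> simp [h]

lemma iid_map {X Y : Type*} (p : PMF X) (φ : X → Y) (m : ℕ) :
    iid (p.map φ) m = (iid p m).map (Multiset.map φ) := by
  induction m with
  | zero => simp [iid, PMF.pure_map]
  | succ n ih =>
    simp only [iid, ih, PMF.map_bind, PMF.bind_map, PMF.map_comp]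
    congr 1
    funext s
    simp only [Function.comp_def, Multiset.map_cons, PMF.map_comp]

lemma iid_support {X : Type*} (p : PMF X) (m : ℕ) :
    ∀ S ∈ (iid p m).support, Multiset.card S = m ∧ ∀ y ∈ S, y ∈ p.support := by
  induction m with
  | zero => intro S hS; simp [iid] at hS; simp [hS]
  | succ n ih =>
    intro S hS
    rw [iid, PMF.mem_support_bind_iff] at hS
    obtain ⟨s, hs, hS⟩ := hS
    rw [PMF.mem_support_map_iff] at hS
    obtain ⟨x, hx, rfl⟩ := hS
    obtain ⟨h1, h2⟩ := ih s hs
    refine ⟨by simp [h1], ?_⟩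
    intro y hy
    rcases Multiset.mem_cons.1 hy with rfl | hy
    · exact hx
    · exact h2 y hy

lemma iid_count {X : Type*} [DecidableEq X] (p : PMF X) (a : X) (m : ℕ) :
    ∑' s, iid p m s * (s.count a : ℝ≥0∞) = m * p a := by
  induction m with
  | zero => simp [iid, pmf_pure_tsum]
  | succ n ih =>
    rw [iid_succ_tsum]
    have : ∀ s : Multiset X, ∑' x, p x * (((x ::ₘ s).count a : ℕ) : ℝ≥0∞)
        = s.count a + p a := by
      intro s
      have : ∀ x, p x * (((x ::ₘ s).count a : ℕ) : ℝ≥0∞)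
          = p x * s.count a + p x * (if a = x then 1 else 0) := by
        intro x
        rw [Multiset.count_cons]
        push_cast
        rw [mul_add]
      simp only [this]
      rw [ENNReal.tsum_add, ENNReal.tsum_mul_right, p.tsum_coe, one_mul]
      congr 1
      rw [tsum_eq_single a]
      · simp
      · intro b hb; simp [hb.symm]
    simp only [this, mul_add]
    rw [ENNReal.tsum_add, ih, ENNReal.tsum_mul_right, PMF.tsum_coe]
    push_cast
    ring

lemma iid_notMem {X : Type*} [DecidableEq X] (p : PMF X) (a : X) (m : ℕ) :
    ∑' s, iid p m s * (if a ∉ s then 1 else 0 : ℝ≥0∞) = (1 - p a) ^ m := by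
  induction m with
  | zero => simp only [iid, pmf_pure_tsum]; simp
  | succ n ih =>
    rw [iid_succ_tsum, pow_succ, ← ih, ← ENNReal.tsum_mul_right]
    apply tsum_congr
    intro s
    rw [mul_assoc]
    congr 1
    have h1 : ∑' x, p x * (if a ≠ x then 1 else 0 : ℝ≥0∞) = 1 - p a := by
      apply ENNReal.eq_sub_of_add_eq (p.apply_ne_top a)
      have : p a = ∑' x, p x * (if a = x then 1 else 0 : ℝ≥0∞) := by
        rw [tsum_eq_single a]
        · simp
        · intro b hb; simp [hb.symm]
      conv_lhs => rw [this]
      rw [← ENNReal.tsum_add, ← p.tsum_coe]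
      apply tsum_congr
      intro x
      by_cases h : a = x <;> simp [h]
    rw [← h1, ← ENNReal.tsum_mul_left]
    apply tsum_congr
    intro x
    by_cases h : a = x <;> by_cases h' : a ∈ s <;> simp [h, h', Multiset.mem_cons]
    all_goals simp_all

/-- averaging argument -/
lemma core {Ω H : Type*} [Fintype H] [Nonempty H] (W : PMF Ω) (E : H → Ω → Prop)
    (σ : Ω → H → H) (hσ : ∀ ω h, σ ω (σ ω h) = h) (bad : Set Ω)
    (hE : ∀ ω ∈ W.support, ω ∉ bad → ∀ h, E h ω → ¬ E (σ ω h) ω) :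
    ∃ h, W.toOuterMeasure {ω | E h ω} ≤ 2⁻¹ + W.toOuterMeasure bad := by
  classical
  by_contra hcon
  push Not at hcon
  have h1 : (Finset.univ.sum fun _ : H => (2⁻¹ + W.toOuterMeasure bad))
      < Finset.univ.sum fun h : H => W.toOuterMeasure {ω | E h ω} :=
    ENNReal.sum_lt_sum_of_nonempty Finset.univ_nonempty (fun h _ => hcon h)
  have h2 : (Finset.univ.sum fun h : H => W.toOuterMeasure {ω | E h ω})
      = ∑' ω, W ω * ((Finset.univ.filter fun h => E h ω).card : ℝ≥0∞) := by
    simp only [outer_eq_tsum]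
    rw [← Summable.tsum_finsetSum (fun _ _ => ENNReal.summable)]
    apply tsum_congr
    intro ω
    rw [← Finset.mul_sum]
    congr 1
    simp
  have h3 : ∑' ω, W ω * ((Finset.univ.filter fun h => E h ω).card : ℝ≥0∞)
      ≤ ∑' ω, (W ω * ((Fintype.card H : ℝ≥0∞) * 2⁻¹)
        + (Fintype.card H : ℝ≥0∞) * (W ω * (if ω ∈ bad then 1 else 0))) := by
    apply ENNReal.tsum_le_tsum
    intro ω
    by_cases hω : ω ∈ W.support
    · by_cases hb : ω ∈ bad
      · have : ((Finset.univ.filter fun h => E h ω).card : ℝ≥0∞) ≤ Fintype.card H := by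
          exact_mod_cast Finset.card_le_univ _
        simp only [hb, if_true, mul_one]
        calc _ ≤ W ω * (Fintype.card H : ℝ≥0∞) := by gcongr
          _ ≤ _ := by rw [mul_comm]; exact le_add_self
      · have hc : 2 * (Finset.univ.filter fun h => E h ω).card ≤ Fintype.card H := by
          have e1 : (Finset.univ.filter fun h => E h ω).card
              ≤ (Finset.univ.filter fun h => ¬ E h ω).card := by
            apply Finset.card_le_card_of_injOn (σ ω)
            · intro h hh
              simp only [Finset.coe_filter, Finset.mem_univ, true_and, Set.mem_ofPred_eq] at hh ⊢
              exact hE ω hω hb h hh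
            · intro a _ b _ hab
              rw [← hσ ω a, hab, hσ]
          have e2 := Finset.card_filter_add_card_filter_not
            (s := (Finset.univ : Finset H)) (fun h => E h ω)
          rw [Finset.card_univ] at e2
          omega
        simp only [hb, if_false, mul_zero, add_zero]
        gcongr
        rw [← div_eq_mul_inv, ENNReal.le_div_iff_mul_le (by simp) (by simp), mul_comm]
        exact_mod_cast hc
    · have : W ω = 0 := by simpa [PMF.mem_support_iff] using hω
      simp [this]
  rw [ENNReal.tsum_add, ENNReal.tsum_mul_right, ENNReal.tsum_mul_left, W.tsum_coe, one_mul,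
    ← outer_eq_tsum] at h3
  rw [h2, Finset.sum_const, Finset.card_univ, nsmul_eq_mul, mul_add] at h1
  exact absurd h1 (not_lt.2 h3)

/-- The set coded by a Boolean function. -/
def Bset {n : ℕ} (h : Fin n → Bool) : Finset ℕ :=
  Finset.univ.image fun x : Fin n => 2 * (x : ℕ) + (h x).toNat

lemma enc_inj {n : ℕ} {h h' : Fin n → Bool} {x y : Fin n}
    (e : 2 * (x : ℕ) + (h x).toNat = 2 * (y : ℕ) + (h' y).toNat) : x = y ∧ h x = h' y := by
  have h1 : x = y := by
    apply Fin.ext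
    have h1 := Bool.toNat_le (h x)
    have h2 := Bool.toNat_le (h' y)
    omega
  subst h1
  refine ⟨rfl, ?_⟩
  cases hx : h x <;> cases hy : h' x <;> simp [hx, hy] at e ⊢

lemma mem_Bset {n : ℕ} (h : Fin n → Bool) (a : ℕ) :
    a ∈ Bset h ↔ ∃ x : Fin n, 2 * (x : ℕ) + (h x).toNat = a := by
  simp [Bset]

lemma Bset_card {n : ℕ} (h : Fin n → Bool) : (Bset h).card = n := by
  rw [Bset, Finset.card_image_of_injective]
  · simp
  · intro x y e
    exact (enc_inj e).1

lemma Bset_inj {n : ℕ} {h h' : Fin n → Bool} (e : Bset h = Bset h') : h = h' := by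
  funext x
  have : 2 * (x : ℕ) + (h x).toNat ∈ Bset h' := by
    rw [← e, mem_Bset]; exact ⟨x, rfl⟩
  rw [mem_Bset] at this
  obtain ⟨y, hy⟩ := this
  obtain ⟨rfl, h2⟩ := enc_inj hy
  exact h2.symm

/-- Sample points. -/
def phi {n : ℕ} (i : ℕ) (h : Fin n → Bool) : Option (Fin n) → ℕ × ℕ
  | some x => (2 * (x : ℕ) + (h x).toNat, 3)
  | none => (i, 4)

lemma phi_inj {n : ℕ} (i : ℕ) (h : Fin n → Bool) : Function.Injective (phi i h) := by
  intro a b e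
  cases a <;> cases b <;> simp [phi] at e ⊢
  exact (enc_inj e).1

/-- Base distribution. -/
noncomputable def rbase (n k : ℕ) (hn : 1 ≤ n) (hk : 1 ≤ k) : PMF (Option (Fin n)) :=
  PMF.ofFintype (fun a => match a with
    | some _ => (1 - (k : ℝ≥0∞)⁻¹) * (n : ℝ≥0∞)⁻¹
    | none => (k : ℝ≥0∞)⁻¹) (by
    rw [Fintype.sum_option]
    simp only [Finset.sum_const, Finset.card_univ, Fintype.card_fin, nsmul_eq_mul]
    rw [mul_left_comm, ENNReal.mul_inv_cancel (by positivity) (by simp), mul_one]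
    apply add_tsub_cancel_of_le
    rw [ENNReal.inv_le_one]
    exact_mod_cast hk)

lemma rbase_some {n k : ℕ} (hn : 1 ≤ n) (hk : 1 ≤ k) (x : Fin n) :
    rbase n k hn hk (some x) = (1 - (k : ℝ≥0∞)⁻¹) * (n : ℝ≥0∞)⁻¹ := by
  simp [rbase]

lemma rbase_none {n k : ℕ} (hn : 1 ≤ n) (hk : 1 ≤ k) :
    rbase n k hn hk none = (k : ℝ≥0∞)⁻¹ := by
  simp [rbase]

lemma map_inj_apply {α β : Type*} (p : PMF α) (g : α → β) (hg : Function.Injective g) (a : α) :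
    (p.map g) (g a) = p a := by
  classical
  rw [PMF.map_apply, tsum_eq_single a]
  · simp
  · intro b hb
    rw [if_neg]
    intro e
    exact hb (hg e).symm

lemma map_apply_zero {α β : Type*} (p : PMF α) (g : α → β) (y : β) (hy : ∀ a, g a ≠ y) :
    (p.map g) y = 0 := by
  classical
  rw [PMF.map_apply, ENNReal.tsum_eq_zero]
  intro a
  rw [if_neg (hy a).symm]

lemma isPijk_map (B : ℕ → Finset ℕ) {n k : ℕ} (hn : 1 ≤ n) (hk : 1 ≤ k) (i : ℕ)
    (h : Fin n → Bool) (hi : B i = Bset h) :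
    IsPijk B i 1 k ((rbase n k hn hk).map (phi i h)) := by
  intro y
  rw [hi, Bset_card]
  by_cases hy : ∃ a, phi i h a = y
  · obtain ⟨a, rfl⟩ := hy
    rw [map_inj_apply _ _ (phi_inj i h)]
    cases a with
    | none => simp [rbase_none, phi]
    | some x =>
      have : 2 * (x : ℕ) + (h x).toNat ∈ Bset h := (mem_Bset _ _).2 ⟨x, rfl⟩
      simp [rbase_some, phi, this]
  · push Not at hy
    rw [map_apply_zero _ _ _ hy]
    have h1 : ¬ (y.1 ∈ Bset h ∧ y.2 = 2 * 1 + 1) := by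
      rintro ⟨h1, h2⟩
      obtain ⟨x, hx⟩ := (mem_Bset _ _).1 h1
      exact hy (some x) (Prod.ext hx h2.symm)
    have h2 : y ≠ (i, 2 * 1 + 2) := fun e => hy none e.symm
    rw [if_neg h1, if_neg h2]
    simp

/-- Flip a Boolean function outside the sample. -/
def flipOff {n : ℕ} (ω : Multiset (Option (Fin n))) (h : Fin n → Bool) : Fin n → Bool :=
  fun x => if some x ∈ ω then h x else !(h x)

lemma flipOff_flipOff {n : ℕ} (ω : Multiset (Option (Fin n))) (h : Fin n → Bool) :
    flipOff ω (flipOff ω h) = h := by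
  funext x
  by_cases hx : some x ∈ ω <;> simp [flipOff, hx]

lemma tv_flip {m k : ℕ} (hm : 1 ≤ m) (hk : 4 ≤ k) (hn : 1 ≤ 2 * m) (hk1 : 1 ≤ k)
    (i i' : ℕ) (h : Fin (2 * m) → Bool) (ω : Multiset (Option (Fin (2 * m))))
    (hω : Multiset.card ω = m) :
    3 / 16 ≤ tv ((rbase (2 * m) k hn hk1).map (phi i h))
      ((rbase (2 * m) k hn hk1).map (phi i' (flipOff ω h))) := by
  classical
  set p := (rbase (2 * m) k hn hk1).map (phi i h) with hp
  set q := (rbase (2 * m) k hn hk1).map (phi i' (flipOff ω h)) with hq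
  let D : Finset (Fin (2 * m)) := Finset.univ.filter fun x => some x ∉ ω
  let ι : Fin (2 * m) → ℕ × ℕ := fun x => phi i h (some x)
  have hι : Function.Injective ι := (phi_inj i h).comp (Option.some_injective _)
  have hD : m ≤ D.card := by
    have e1 : (Finset.univ.filter fun x : Fin (2 * m) => some x ∈ ω).card ≤ m := by
      calc _ ≤ ω.toFinset.card := by
            apply Finset.card_le_card_of_injOn some
            · intro x hx
              simpa using hx
            · exact (Option.some_injective _).injOn
        _ ≤ Multiset.card ω := Multiset.toFinset_card_le ω
        _ = m := hω
    have e2 := Finset.card_filter_add_card_filter_not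
      (s := (Finset.univ : Finset (Fin (2 * m)))) (fun x => some x ∈ ω)
    rw [Finset.card_univ, Fintype.card_fin] at e2
    change m ≤ (Finset.univ.filter fun x : Fin (2 * m) => ¬ some x ∈ ω).card
    omega
  have hval : ∀ x ∈ D, |(p (ι x)).toReal - (q (ι x)).toReal|
      = (1 - (k : ℝ)⁻¹) * ((2 * m : ℕ) : ℝ)⁻¹ := by
    intro x hx
    have hx' : some x ∉ ω := by simpa [D] using hx
    have e1 : p (ι x) = (1 - (k : ℝ≥0∞)⁻¹) * ((2 * m : ℕ) : ℝ≥0∞)⁻¹ := by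
      rw [hp, map_inj_apply _ _ (phi_inj i h), rbase_some]
    have e2 : q (ι x) = 0 := by
      apply map_apply_zero
      intro a e
      cases a with
      | none => simp [ι, phi] at e
      | some y =>
        simp only [ι, phi, Prod.mk.injEq, and_true] at e
        obtain ⟨rfl, h2⟩ := enc_inj e
        simp [flipOff, hx'] at h2
    have hk' : (k : ℝ)⁻¹ ≤ 1 := by
      apply inv_le_one_of_one_le₀; exact_mod_cast hk1
    rw [e1, e2, ENNReal.toReal_mul, ENNReal.toReal_sub_of_le _ (by simp)]
    · simp only [ENNReal.toReal_one, ENNReal.toReal_inv, ENNReal.toReal_natCast,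
        ENNReal.toReal_zero, sub_zero]
      apply abs_of_nonneg
      apply mul_nonneg (by linarith) (by positivity)
    · rw [ENNReal.inv_le_one]; exact_mod_cast hk1
  have hsum : (D.image ι).sum (fun y => |(p y).toReal - (q y).toReal|)
      ≤ ∑' y, |(p y).toReal - (q y).toReal| :=
    (pmf_diff_summable p q).sum_le_tsum _ (fun _ _ => abs_nonneg _)
  rw [Finset.sum_image (fun _ _ _ _ e => hι e), Finset.sum_congr rfl hval, Finset.sum_const,
    nsmul_eq_mul] at hsum
  have hk4 : (k : ℝ)⁻¹ ≤ 1 / 4 := by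
    rw [inv_eq_one_div]
    apply one_div_le_one_div_of_le (by norm_num); exact_mod_cast hk
  have hm0 : (0 : ℝ) < m := by exact_mod_cast hm
  have : (3 : ℝ) / 8 ≤ D.card * ((1 - (k : ℝ)⁻¹) * ((2 * m : ℕ) : ℝ)⁻¹) := by
    have hD' : (m : ℝ) ≤ D.card := by exact_mod_cast hD
    calc (3 : ℝ) / 8 = m * ((1 - 1 / 4) * ((2 * m : ℕ) : ℝ)⁻¹) := by
          push_cast; field_simp; norm_num
      _ ≤ _ := by gcongr
  unfold tv
  linarith

/-- The lower bound for a deterministic adversary that is symmetric under flips. -/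
lemma lower (B : ℕ → Finset ℕ) (I : ∀ n, (Fin n → Bool) → ℕ)
    (hI : ∀ n h, B (I n h) = Bset h) (k : ℕ) (η b : ℝ) (hη : 0 < η) (hk : 4 ≤ k)
    (hkη : 8 / η ≤ k) (hb : b ≤ 1 / 16) (v : Multiset (ℕ × ℕ) → Multiset (ℕ × ℕ))
    (hv : ∀ m : ℕ, 1 ≤ m → ∀ ω : Multiset (Option (Fin (2 * m))), Multiset.card ω = m →
      ω.count none ≤ ⌊η * m⌋₊ → ∀ h,
      v (ω.map (phi (I _ h) h)) = v (ω.map (phi (I _ (flipOff ω h)) (flipOff ω h))))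
    (A : Multiset (ℕ × ℕ) → PMF (ℕ × ℕ)) (mc : ℝ → ℝ → ℕ) :
    ¬ RobustLearnerFor (Cg B fun _ => k) A mc (fun S => PMF.pure (v S)) b := by
  classical
  intro hA
  set m := max (mc (1/64) (1/4)) 1 with hm
  have hm1 : 1 ≤ m := le_max_right _ _
  have hn : 1 ≤ 2 * m := by omega
  have hk1 : 1 ≤ k := by omega
  let P : (Fin (2 * m) → Bool) → PMF (ℕ × ℕ) := fun h =>
    (rbase (2 * m) k hn hk1).map (phi (I _ h) h)
  let W := iid (rbase (2 * m) k hn hk1) m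
  let bad : Set (Multiset (Option (Fin (2 * m)))) := {ω | ⌊η * m⌋₊ < ω.count none}
  have hm0 : (0 : ℝ) < m := by exact_mod_cast hm1
  have hbad : W.toOuterMeasure bad ≤ ENNReal.ofReal (1/8) := by
    have e1 : ENNReal.ofReal (η * m) * W.toOuterMeasure bad ≤ m * (k : ℝ≥0∞)⁻¹ := by
      rw [← rbase_none hn hk1, ← iid_count, outer_eq_tsum, ← ENNReal.tsum_mul_left]
      apply ENNReal.tsum_le_tsum
      intro ω
      rw [mul_left_comm]
      gcongr
      by_cases h : ω ∈ bad
      · simp only [h, if_true, mul_one]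
        rw [← ENNReal.ofReal_natCast]
        apply ENNReal.ofReal_le_ofReal
        exact (Nat.floor_lt (by positivity)).1 h |>.le
      · simp [h]
    have e2 : (m : ℝ≥0∞) * (k : ℝ≥0∞)⁻¹ ≤ ENNReal.ofReal (η * m) * ENNReal.ofReal (1/8) := by
      have hk0 : (0 : ℝ) < k := by exact_mod_cast hk1
      rw [← ENNReal.ofReal_natCast, ← ENNReal.ofReal_natCast, ← ENNReal.ofReal_inv_of_pos hk0,
        ← ENNReal.ofReal_mul hm0.le, ← ENNReal.ofReal_mul (by positivity)]
      apply ENNReal.ofReal_le_ofReal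
      rw [div_le_iff₀ hη] at hkη
      rw [← div_eq_mul_inv, div_le_iff₀ hk0]
      nlinarith
    have h0 : ENNReal.ofReal (η * m) ≠ 0 := by
      simp only [ne_eq, ENNReal.ofReal_eq_zero, not_le]; positivity
    exact (ENNReal.mul_le_mul_iff_right h0 ENNReal.ofReal_ne_top).1 (e1.trans e2)
  obtain ⟨h, hh⟩ := core W
    (fun h ω => tv (A (v (ω.map (phi (I _ h) h)))) (P h) ≤ b + 1/64)
    (fun ω h => flipOff ω h) (fun ω h => flipOff_flipOff ω h) bad (by
      intro ω hω hb' h h1 h2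
      have hc := (iid_support _ _ ω hω).1
      rw [← hv m hm1 ω hc (by simpa [bad] using hb') h] at h2
      have t := tv_triangle (A (v (ω.map (phi (I _ h) h)))) (P h) (P (flipOff ω h))
      have t2 : 3 / 16 ≤ tv (P h) (P (flipOff ω h)) := tv_flip hm1 hk hn hk1 _ _ h ω hc
      linarith)
  by_cases hk2 : 1 < k
  swap
  · omega
  have hmem : P h ∈ Cg B fun _ => k := by
    refine ⟨I _ h, 1, le_rfl, hk2, ?_, isPijk_map B hn hk1 _ h (hI _ h)⟩
    rw [← Finset.card_pos, hI, Bset_card]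
    omega
  have key := hA (P h) hmem (1/64) (1/4) (by norm_num) (by norm_num) (by norm_num) (by norm_num)
    m (le_max_left _ _)
  have heq : probEvent ((iid (P h) m).bind fun S => PMF.pure (v S)) {T | tv (A T) (P h) ≤ b + 1/64}
      = W.toOuterMeasure {ω | tv (A (v (ω.map (phi (I _ h) h)))) (P h) ≤ b + 1/64} := by
    unfold probEvent
    change PMF.toOuterMeasure (PMF.map v (iid (P h) m)) _ = _
    rw [iid_map, PMF.map_comp, PMF.toOuterMeasure_map_apply]
    rfl
  rw [heq] at key
  have fin := key.trans (hh.trans (add_le_add_right hbad _))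
  rw [show (1 : ℝ≥0∞) = ENNReal.ofReal 1 by simp, ← ENNReal.ofReal_sub _ (by norm_num),
    show (2⁻¹ : ℝ≥0∞) = ENNReal.ofReal (1/2) by
      rw [one_div, ENNReal.ofReal_inv_of_pos (by norm_num)]; simp,
    ← ENNReal.ofReal_add (by norm_num) (by norm_num),
    ENNReal.ofReal_le_ofReal_iff (by norm_num)] at fin
  norm_num at fin

/-- Realizable learner. -/
lemma learner (B : ℕ → Finset ℕ) (k : ℕ) (hk : 1 ≤ k) :
    ∃ A : Multiset (ℕ × ℕ) → PMF (ℕ × ℕ),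
        ∀ p ∈ Cg B (fun _ => k), ∀ ε δ : ℝ, 0 < ε → ε < 1 → 0 < δ → δ < 1 →
          ∀ m : ℕ, Real.log (1 / δ) * (k : ℝ) ≤ m →
            1 - ENNReal.ofReal δ ≤ probEvent (iid p m) {S | tv (A S) p ≤ ε} := by
  classical
  let Good : Multiset (ℕ × ℕ) → PMF (ℕ × ℕ) → Prop := fun S p =>
    ∃ i j : ℕ, (i, 2 * j + 2) ∈ S ∧ IsPijk B i j k p
  refine ⟨fun S => if h : ∃ p, Good S p then Classical.choose h else PMF.pure (0, 0), ?_⟩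
  rintro p ⟨i, j, hj, hjk, hBi, hp⟩ ε δ hε - hδ - m hm
  have hval : p (i, 2 * j + 2) = (k : ℝ≥0∞)⁻¹ := by
    rw [hp]
    have : ¬ (2 * j + 2 = 2 * j + 1) := by omega
    simp [this]
  have hzero : ∀ i' j' : ℕ, (i', 2 * j' + 2) ∈ p.support → i' = i ∧ j' = j := by
    intro i' j' h
    by_contra hne
    apply (PMF.mem_support_iff _ _).1 h
    rw [hp]
    have h1 : ¬ (2 * j' + 2 = 2 * j + 1) := by omega
    have h2 : ¬ ((i', 2 * j' + 2) = (i, 2 * j + 2)) := by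
      intro e
      simp only [Prod.mk.injEq] at e
      exact hne ⟨e.1, by omega⟩
    rw [if_neg h2]
    simp [h1]
  have h1 : (iid p m).toOuterMeasure {S | (i, 2 * j + 2) ∉ S} ≤ ENNReal.ofReal δ := by
    rw [outer_eq_tsum]
    simp only [Set.mem_ofPred_eq]
    rw [iid_notMem, hval]
    have hk0 : (0 : ℝ) < k := by exact_mod_cast hk
    have hk' : (k : ℝ)⁻¹ ≤ 1 := by
      apply inv_le_one_of_one_le₀; exact_mod_cast hk
    rw [← ENNReal.ofReal_natCast, ← ENNReal.ofReal_inv_of_pos hk0,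
      show (1 : ℝ≥0∞) = ENNReal.ofReal 1 by simp, ← ENNReal.ofReal_sub _ (by positivity),
      ← ENNReal.ofReal_pow (by linarith)]
    apply ENNReal.ofReal_le_ofReal
    have e1 : 1 - (k : ℝ)⁻¹ ≤ Real.exp (-(k : ℝ)⁻¹) := by
      have := Real.add_one_le_exp (-(k : ℝ)⁻¹); linarith
    calc (1 - (k : ℝ)⁻¹) ^ m ≤ Real.exp (-(k : ℝ)⁻¹) ^ m :=
          pow_le_pow_left₀ (by linarith) e1 m
      _ = Real.exp (m * (-(k : ℝ)⁻¹)) := by rw [← Real.exp_nat_mul]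
      _ ≤ Real.exp (Real.log δ) := by
          apply Real.exp_le_exp.2
          rw [one_div, Real.log_inv] at hm
          have : -Real.log δ ≤ m * (k : ℝ)⁻¹ := by
            rw [← div_eq_mul_inv, le_div_iff₀ hk0]; exact hm
          linarith
      _ = δ := Real.exp_log hδ
  rw [tsub_le_iff_right]
  refine le_trans ?_ (add_le_add_right h1 _)
  unfold probEvent
  rw [outer_eq_tsum, outer_eq_tsum, ← ENNReal.tsum_add]
  refine le_trans (iid p m).tsum_coe.ge ?_
  apply ENNReal.tsum_le_tsum
  intro S
  by_cases hS : S ∈ (iid p m).support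
  · by_cases hx : (i, 2 * j + 2) ∈ S
    · have hex : ∃ p, Good S p := ⟨p, i, j, hx, hp⟩
      have heq : Classical.choose hex = p := by
        obtain ⟨i', j', hmem, hp'⟩ := Classical.choose_spec hex
        obtain ⟨rfl, rfl⟩ := hzero i' j' ((iid_support p m S hS).2 _ hmem)
        apply PMF.ext
        intro x
        rw [hp x, hp' x]
      have : S ∈ {S | tv (if h : ∃ p, Good S p then Classical.choose h
          else PMF.pure (0, 0)) p ≤ ε} := by
        simp only [Set.mem_ofPred_eq]
        rw [dif_pos hex, heq, tv_self]
        exact hε.le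
      rw [if_pos this, mul_one]
      exact le_self_add
    · have : S ∈ {S : Multiset (ℕ × ℕ) | (i, 2 * j + 2) ∉ S} := hx
      rw [if_pos this, mul_one]
      exact le_add_self
  · have : iid p m S = 0 := by simpa [PMF.mem_support_iff] using hS
    simp [this]

lemma filter_none_eq {α : Type*} [DecidableEq (Option α)] (ω : Multiset (Option α))
    [DecidablePred fun a : Option α => a = none] :
    ω.filter (fun a => a = none) = Multiset.replicate (ω.count none) none := by
  rw [← Multiset.filter_eq']
  congr

/-- subtractive adversary -/
lemma exists_sub (I : ∀ n, (Fin n → Bool) → ℕ) (η : ℝ) (hη : 0 < η) (hη1 : η < 1) :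
    ∃ v : Multiset (ℕ × ℕ) → Multiset (ℕ × ℕ),
      (∀ S, v S ≤ S ∧ Multiset.card (v S) = Multiset.card S - ⌊η * Multiset.card S⌋₊) ∧
      ∀ m : ℕ, 1 ≤ m → ∀ ω : Multiset (Option (Fin (2 * m))), Multiset.card ω = m →
      ω.count none ≤ ⌊η * m⌋₊ → ∀ h,
      v (ω.map (phi (I _ h) h)) = v (ω.map (phi (I _ (flipOff ω h)) (flipOff ω h))) := by
  classical
  let c : ℕ → ℕ := fun m => m - ⌊η * m⌋₊
  have hex : ∀ (S : Multiset (ℕ × ℕ)) (a : ℕ), a ≤ Multiset.card S →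
      ∃ T, T ≤ S ∧ Multiset.card T = a := by
    intro S a h
    refine ⟨(S.toList.take a : List (ℕ × ℕ)), ?_, ?_⟩
    · conv_rhs => rw [← S.coe_toList]
      exact Multiset.coe_le.2 (List.take_sublist _ _).subperm
    · simpa using h
  choose w hw using hex
  let F : Multiset (ℕ × ℕ) → Multiset (ℕ × ℕ) := fun S => S.filter fun y => y.2 ≠ 4
  refine ⟨fun S => if h : c (Multiset.card S) ≤ Multiset.card (F S) then w (F S) _ h
    else w S (c (Multiset.card S)) (Nat.sub_le _ _), ?_, ?_⟩
  · intro S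
    by_cases h : c (Multiset.card S) ≤ Multiset.card (F S)
    · simp only [h, dif_pos]
      exact ⟨(hw _ _ h).1.trans (Multiset.filter_le _ _), (hw _ _ h).2⟩
    · simp only [h, dif_neg, not_false_eq_true]
      exact hw _ _ _
  · intro m hm ω hω hN h
    have hF : ∀ i (g : Fin (2 * m) → Bool), F (ω.map (phi i g))
        = (ω.filter fun a => a ≠ none).map (phi i g) := by
      intro i g
      simp only [F, Multiset.filter_map]
      congr 1
      apply Multiset.filter_congr
      intro a _
      cases a <;> simp [phi]
    have hFF : F (ω.map (phi (I _ h) h))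
        = F (ω.map (phi (I _ (flipOff ω h)) (flipOff ω h))) := by
      rw [hF, hF]
      apply Multiset.map_congr rfl
      intro a ha
      rw [Multiset.mem_filter] at ha
      cases a with
      | none => simp at ha
      | some x => simp [phi, flipOff, ha.1]
    have hcard : ∀ i (g : Fin (2 * m) → Bool), c (Multiset.card (ω.map (phi i g)))
        ≤ Multiset.card (F (ω.map (phi i g))) := by
      intro i g
      rw [hF, Multiset.card_map, Multiset.card_map, hω]
      have e := congrArg Multiset.card (Multiset.filter_add_not (fun a => a = none) ω)
      rw [Multiset.card_add, filter_none_eq, Multiset.card_replicate, hω] at e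
      simp only [c, ne_eq]
      omega
    simp only [hcard, dif_pos]
    have : Multiset.card (ω.map (phi (I _ h) h))
        = Multiset.card (ω.map (phi (I _ (flipOff ω h)) (flipOff ω h))) := by simp
    simp only [hFF, this]

/-- additive adversary -/
lemma exists_add (B : ℕ → Finset ℕ) (I : ∀ n, (Fin n → Bool) → ℕ)
    (hI : ∀ n h, B (I n h) = Bset h) (η : ℝ) :
    ∃ v : Multiset (ℕ × ℕ) → Multiset (ℕ × ℕ),
      (∀ S, S ≤ v S ∧ Multiset.card (v S) = Multiset.card S + ⌊η * Multiset.card S⌋₊) ∧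
      ∀ m : ℕ, 1 ≤ m → ∀ ω : Multiset (Option (Fin (2 * m))), Multiset.card ω = m →
      ω.count none ≤ ⌊η * m⌋₊ → ∀ h,
      v (ω.map (phi (I _ h) h)) = v (ω.map (phi (I _ (flipOff ω h)) (flipOff ω h))) := by
  classical
  let ext : ∀ m : ℕ, Multiset (Option (Fin (2 * m))) → (Fin (2 * m) → Bool) →
      Multiset (ℕ × ℕ) := fun m ω h =>
    Multiset.replicate (ω.count none) (I _ (flipOff ω h), 4)
      + Multiset.replicate (⌊η * m⌋₊ - ω.count none) (0, 0)
  let R : Multiset (ℕ × ℕ) → Multiset (ℕ × ℕ) → Prop := fun S T =>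
    ∃ (ω : Multiset (Option (Fin (2 * Multiset.card S)))) (h : _),
      ω.count none ≤ ⌊η * Multiset.card S⌋₊ ∧ S = ω.map (phi (I _ h) h) ∧
      T = S + ext _ ω h
  have hR : ∀ S, ∃ T, (S ≤ T ∧ Multiset.card T = Multiset.card S + ⌊η * Multiset.card S⌋₊) ∧
      ((∃ T', R S T') → R S T) := by
    intro S
    by_cases h : ∃ T', R S T'
    · obtain ⟨T, ω, h, h1, h2, h3⟩ := h
      refine ⟨T, ⟨h3 ▸ Multiset.le_add_right _ _, ?_⟩, fun _ => ⟨ω, h, h1, h2, h3⟩⟩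
      rw [h3]
      simp only [ext, Multiset.card_add, Multiset.card_replicate]
      omega
    · exact ⟨S + Multiset.replicate ⌊η * Multiset.card S⌋₊ (0, 0),
        ⟨Multiset.le_add_right _ _, by simp⟩, fun h' => absurd h' h⟩
  choose v hv hv2 using hR
  refine ⟨v, hv, ?_⟩
  have hcount : ∀ {n : ℕ} i (h : Fin n → Bool) (ω : Multiset (Option (Fin n))),
      (ω.map (phi i h)).filter (fun y => y.2 = 4) = Multiset.replicate (ω.count none) (i, 4) := by
    intro n i h ω
    rw [Multiset.filter_map]
    have : ω.filter ((fun y : ℕ × ℕ => y.2 = 4) ∘ phi i h) = ω.filter (fun a => a = none) := by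
      apply Multiset.filter_congr
      intro a _
      cases a <;> simp [phi]
    rw [this, filter_none_eq, Multiset.map_replicate]
    rfl
  -- the extension is determined by the sample
  have huniq : ∀ m : ℕ, ∀ ω ω' : Multiset (Option (Fin (2 * m))), ∀ h h',
      ω.map (phi (I _ h) h) = ω'.map (phi (I _ h') h') → ext m ω h = ext m ω' h' := by
    intro m ω ω' h h' e
    have e1 := congrArg (Multiset.filter (fun y : ℕ × ℕ => y.2 = 4)) e
    rw [hcount, hcount] at e1
    have e2 : ω.count none = ω'.count none := by
      simpa using congrArg Multiset.card e1
    by_cases h0 : ω.count none = 0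
    · simp only [ext, ← e2, h0, Multiset.replicate_zero]
    · have e3 : I _ h = I _ h' := by
        rw [← e2, Multiset.replicate_right_inj h0] at e1
        simpa using e1
      have e4 : h = h' := by
        apply Bset_inj
        rw [← hI, ← hI, e3]
      subst e4
      rw [Multiset.map_injective (phi_inj _ _) e]
  have hvval : ∀ m : ℕ, ∀ ω : Multiset (Option (Fin (2 * m))), Multiset.card ω = m →
      ω.count none ≤ ⌊η * m⌋₊ → ∀ h,
      v (ω.map (phi (I _ h) h)) = ω.map (phi (I _ h) h) + ext m ω h := by
    intro m ω hω hN h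
    obtain ⟨S, hS⟩ : ∃ S, S = ω.map (phi (I _ h) h) := ⟨_, rfl⟩
    have hc : m = Multiset.card S := by rw [hS, Multiset.card_map, hω]
    subst hc
    rw [← hS]
    obtain ⟨ω', h', h1, h2, h3⟩ := hv2 S ⟨_, ω, h, hN, hS, rfl⟩
    rw [h3, huniq _ ω' ω h' h (h2.symm.trans hS)]
  intro m hm ω hω hN h
  rw [hvval m ω hω hN h, hvval m ω hω hN (flipOff ω h)]
  have hdec : ∀ i (g : Fin (2 * m) → Bool), ω.map (phi i g)
      = Multiset.replicate (ω.count none) (i, 4)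
        + (ω.filter fun a => ¬ a = none).map (phi i g) := by
    intro i g
    conv_lhs => rw [← Multiset.filter_add_not (fun a => a = none) ω]
    rw [Multiset.map_add, filter_none_eq, Multiset.map_replicate]
    rfl
  have hFF : (ω.filter fun a => ¬ a = none).map (phi (I _ h) h)
      = (ω.filter fun a => ¬ a = none).map (phi (I _ (flipOff ω h)) (flipOff ω h)) := by
    apply Multiset.map_congr rfl
    intro a ha
    rw [Multiset.mem_filter] at ha
    cases a with
    | none => simp at ha
    | some x => simp [phi, flipOff, ha.1]
  rw [hdec, hdec (I _ (flipOff ω h)), hFF]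
  simp only [ext, flipOff_flipOff]
  abel

end Helpers

/-- For every continuous, strictly increasing `f : [0,1] → [0,1]` with
`f(0) = 0`, there is a monotone `g` such that `C_g` is realizably PAC learnable with sample
complexity `log(1/δ)·g(1/ε)`, but is neither adaptively additively nor adaptively
subtractively f-robustly learnable, and universal additive and subtractive f-adversaries
for `C_g` exist. -/
theorem stmt14 (B : ℕ → Finset ℕ) (hB : Function.Surjective B)
    (f : ℝ → ℝ) (hf0 : f 0 = 0) (hfc : ContinuousOn f (Set.Icc 0 1))
    (hfm : StrictMonoOn f (Set.Icc 0 1))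
    (hfmap : ∀ x ∈ Set.Icc (0 : ℝ) 1, f x ∈ Set.Icc (0 : ℝ) 1) :
    ∃ g : ℕ → ℕ, Monotone g ∧
      (∃ A : Multiset (ℕ × ℕ) → PMF (ℕ × ℕ),
        ∀ p ∈ Cg B g, ∀ ε δ : ℝ, 0 < ε → ε < 1 → 0 < δ → δ < 1 →
          ∀ m : ℕ, Real.log (1 / δ) * (g ⌈1 / ε⌉₊ : ℝ) ≤ m →
            1 - ENNReal.ofReal δ ≤ probEvent (iid p m) {S | tv (A S) p ≤ ε}) ∧
      (¬ AdditivelyFRobustlyLearnable (Cg B g) f ∧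
        ∃ (V : Adversary (ℕ × ℕ)) (η : ℝ), 0 < η ∧ η < 1 ∧ IsAdditive V ∧
          FixedBudgetAdd V η ∧ ¬ FRobustlyLearnableWrt (Cg B g) f V η) ∧
      (¬ SubtractivelyFRobustlyLearnable (Cg B g) f ∧
        ∃ (V : Adversary (ℕ × ℕ)) (η : ℝ), 0 < η ∧ η < 1 ∧ IsSubtractive V ∧
          FixedBudgetSub V η ∧ ¬ FRobustlyLearnableWrt (Cg B g) f V η) := by

  -- choose a small budget
  obtain ⟨η, hη0, hη1, hfη⟩ : ∃ η : ℝ, 0 < η ∧ η < 1 ∧ f η ≤ 1 / 16 := by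
    have hc := hfc 0 ⟨le_rfl, zero_le_one⟩
    rw [Metric.continuousWithinAt_iff] at hc
    obtain ⟨d, hd, hd2⟩ := hc (1/16) (by norm_num)
    refine ⟨min (d / 2) (1 / 2), by positivity, ?_, ?_⟩
    · exact (min_le_right _ _).trans_lt (by norm_num)
    · have hpos : 0 < min (d / 2) (1 / 2) := by positivity
      have h1 : min (d / 2) (1 / 2) ≤ 1 := (min_le_right _ _).trans (by norm_num)
      have h2 := hd2 (x := min (d / 2) (1 / 2)) ⟨hpos.le, h1⟩ (by
        rw [Real.dist_eq, sub_zero, abs_of_pos hpos]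
        exact (min_le_left _ _).trans_lt (by linarith))
      rw [hf0, Real.dist_eq, sub_zero] at h2
      exact (le_abs_self _).trans h2.le
  obtain ⟨k, hk4, hkη⟩ : ∃ k : ℕ, 4 ≤ k ∧ 8 / η ≤ k :=
    ⟨max 4 ⌈8 / η⌉₊, le_max_left _ _,
      (Nat.le_ceil _).trans (by exact_mod_cast le_max_right _ _)⟩
  choose I hI using fun (n : ℕ) (h : Fin n → Bool) => hB (Bset h)
  obtain ⟨va, hva, hva2⟩ := exists_add B I hI η
  obtain ⟨vs, hvs, hvs2⟩ := exists_sub I η hη0 hη1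
  have hadd : IsAdditive (fun S => PMF.pure (va S)) := by
    intro S T hT
    rw [PMF.support_pure, Set.mem_singleton_iff] at hT
    exact hT ▸ (hva S).1
  have hsub : IsSubtractive (fun S => PMF.pure (vs S)) := by
    intro S T hT
    rw [PMF.support_pure, Set.mem_singleton_iff] at hT
    exact hT ▸ (hvs S).1
  have hfl : ∀ m : ℕ, η * m - 1 < (⌊η * m⌋₊ : ℝ) ∧ (⌊η * m⌋₊ : ℝ) ≤ η * m := fun m =>
    ⟨by linarith [Nat.lt_floor_add_one (η * (m : ℝ))], Nat.floor_le (by positivity)⟩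
  have hbadd : FixedBudgetAdd (fun S => PMF.pure (va S)) η := by
    refine ⟨fun m => m + ⌊η * m⌋₊, ?_, ?_⟩
    · intro S T hT
      rw [PMF.support_pure, Set.mem_singleton_iff] at hT
      exact hT ▸ (hva S).2
    · intro m
      push_cast
      rw [add_sub_cancel_left]
      exact hfl m
  have hbsub : FixedBudgetSub (fun S => PMF.pure (vs S)) η := by
    refine ⟨fun m => m - ⌊η * m⌋₊, ?_, ?_⟩
    · intro S T hT
      rw [PMF.support_pure, Set.mem_singleton_iff] at hT
      exact hT ▸ (hvs S).2
    · intro m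
      have hle : ⌊η * (m : ℝ)⌋₊ ≤ m := by
        have h1 : (⌊η * m⌋₊ : ℝ) ≤ m := (hfl m).2.trans (by
          have : (0 : ℝ) ≤ m := by positivity
          nlinarith)
        exact_mod_cast h1
      rw [Nat.cast_sub hle, sub_sub_cancel]
      exact hfl m
  have hla := lower B I hI k η (f η) hη0 hk4 hkη hfη va hva2
  have hls := lower B I hI k η (f η) hη0 hk4 hkη hfη vs hvs2
  refine ⟨fun _ => k, fun _ _ _ => le_rfl, learner B k (by omega), ⟨?_, ?_⟩, ⟨?_, ?_⟩⟩
  · rintro ⟨A, mc, h⟩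
    exact hla A mc (h _ η hη0 hη1 hadd hbadd)
  · refine ⟨_, η, hη0, hη1, hadd, hbadd, ?_⟩
    rintro ⟨A, mc, h⟩
    exact hla A mc h
  · rintro ⟨A, mc, h⟩
    exact hls A mc (h _ η hη0 hη1 hsub hbsub)
  · refine ⟨_, η, hη0, hη1, hsub, hbsub, ?_⟩
    rintro ⟨A, mc, h⟩
    exact hls A mc h
end

section
/- Let V_obl be a subtractive oblivious adversary with fixed budget η ∈ (0,1) on a countable domain X, let α ≥ 1, ε, δ ∈ (0,1), m ∈ ℕ, let A : X* → Δ(X) be a learner, and let p be a distribution on X such that P_{S ∼ V_obl(p)^{m−⌈ηm⌉}}[d_TV(A(S), p) > α·η + ε] > δ. Then there exists a subtractive ground-truth-aware adaptive adversary V_adp : X* × Δ(X) → X* whose subtractive budget at sample size m equals ⌈ηm⌉/m such that P_{S∼p^m}[d_TV(A(V_adp(S, p)), p) > α·η + ε] > δ/2 (probability over the sample and the adversary's randomness). -/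
open scoped ENNReal NNReal

section Median

/-- The binomial probability of `j` successes out of `n` with success probability `x`. -/
noncomputable def bin (n j : ℕ) (x : ℝ) : ℝ := (bernsteinPolynomial ℝ n j).eval x

lemma bin_eq (n j : ℕ) (x : ℝ) : bin n j x = n.choose j * x ^ j * (1 - x) ^ (n - j) := by
  simp [bin, bernsteinPolynomial]

lemma bin_nonneg (n j : ℕ) {x : ℝ} (h0 : 0 ≤ x) (h1 : x ≤ 1) : 0 ≤ bin n j x := by
  rw [bin_eq]
  have : 0 ≤ 1 - x := by linarith
  positivity

lemma bin_sum (n : ℕ) (x : ℝ) : ∑ j ∈ Finset.range (n + 1), bin n j x = 1 := by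
  have := congrArg (Polynomial.eval x) (bernsteinPolynomial.sum ℝ n)
  simpa [Polynomial.eval_finsetSum, bin] using this

/-- Binomial cdf. -/
noncomputable def bcdf (n k : ℕ) (x : ℝ) : ℝ := ∑ j ∈ Finset.range (k + 1), bin n j x

lemma bcdf_deriv (n k : ℕ) (x : ℝ) :
    HasDerivAt (bcdf n k) (-(n * bin (n - 1) k x)) x := by
  induction k with
  | zero =>
    have h := (bernsteinPolynomial ℝ n 0).hasDerivAt x
    rw [bernsteinPolynomial.derivative_zero] at h
    have e : bcdf n 0 = fun x => (bernsteinPolynomial ℝ n 0).eval x := by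
      ext y; simp [bcdf, bin]
    rw [e]
    refine h.congr_deriv ?_
    simp [bin]
  | succ k ih =>
    have h := (bernsteinPolynomial ℝ n (k+1)).hasDerivAt x
    rw [bernsteinPolynomial.derivative_succ] at h
    have e : bcdf n (k+1) = fun x => bcdf n k x + (bernsteinPolynomial ℝ n (k+1)).eval x := by
      ext y; simp [bcdf, bin, Finset.sum_range_succ _ (k+1)]
    rw [e]
    refine (ih.add h).congr_deriv ?_
    simp [bin]
    ring

lemma bcdf_anti (n k : ℕ) {x y : ℝ} (hx : 0 ≤ x) (hxy : x ≤ y) (hy : y ≤ 1) :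
    bcdf n k y ≤ bcdf n k x := by
  have : AntitoneOn (bcdf n k) (Set.Icc 0 1) := by
    apply antitoneOn_of_deriv_nonpos (convex_Icc 0 1)
    · exact fun z _ => (bcdf_deriv n k z).continuousAt.continuousWithinAt
    · exact fun z _ => (bcdf_deriv n k z).differentiableAt.differentiableWithinAt
    · intro z hz
      rw [interior_Icc] at hz
      rw [(bcdf_deriv n k z).deriv]
      have := bin_nonneg (n-1) k hz.1.le hz.2.le
      have : 0 ≤ (n:ℝ) * bin (n-1) k z := by positivity
      linarith
  exact this ⟨hx, hxy.trans hy⟩ ⟨hx.trans hxy, hy⟩ hxy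

/-- Easy half, mean at least `n/2`. -/
lemma bcdf_big (n k : ℕ) (hk : k ≤ n) (h2 : n ≤ 2 * k) (hn : 0 < n) :
    1 / 2 ≤ bcdf n k ((k : ℝ) / n) := by
  set p : ℝ := (k:ℝ)/n with hp
  have hn' : (0:ℝ) < n := by exact_mod_cast hn
  have hp0 : 0 ≤ p := by positivity
  have hp1 : p ≤ 1 := by rw [hp, div_le_one hn']; exact_mod_cast hk
  have hk0 : (0:ℝ) < k := by
    have : 0 < k := by omega
    exact_mod_cast this
  have hpp : 0 < p := by positivity
  obtain ⟨l, rfl⟩ := Nat.exists_eq_add_of_le hk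
  have hl : l ≤ k := by omega
  have hlR : (l:ℝ) ≤ k := by exact_mod_cast hl
  have hq : 1 - p = (l:ℝ)/((k+l : ℕ):ℝ) := by
    rw [hp]; field_simp; push_cast; ring
  have hrec (j : ℕ) (hj : j < k + l) : bin (k+l) (j+1) p * ((j+1) * (1-p)) = bin (k+l) j p * ((k + l - j) * p) := by
    rw [bin_eq, bin_eq]
    obtain ⟨i, hi⟩ := Nat.exists_eq_add_of_lt hj
    have h1 : k + l - j = i + 1 := by omega
    have h2 : k + l - (j+1) = i := by omega
    have h3 : ((k:ℝ) + l - j) = ((k + l - j : ℕ) : ℝ) := by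
      rw [Nat.cast_sub hj.le]; push_cast; ring
    have hc := Nat.choose_succ_right_eq (k+l) j
    have hc' : ((k+l).choose (j+1) : ℝ) * (j+1) = (k+l).choose j * ((k + l - j : ℕ) : ℝ) := by
      exact_mod_cast hc
    rw [h3, h1] 
    rw [h1] at hc'
    rw [h2, pow_succ, pow_succ]
    linear_combination (p^j * p * (1-p)^i * (1-p)) * hc'
  have key : ∀ j, j < l → bin (k+l) (k+j+1) p ≤ bin (k+l) (k-j) p := by
    intro j
    induction j with
    | zero =>
      intro hj
      have r := hrec k (by omega)
      have hl0 : (0:ℝ) < l := by exact_mod_cast hj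
      have b0 := bin_nonneg (k+l) k hp0 hp1
      have e1 : p * ((k+l:ℕ):ℝ) = k := by rw [hp]; field_simp
      have e2 : (1 - p) * ((k+l:ℕ):ℝ) = l := by rw [hq]; field_simp
      have : bin (k+l) (k+1) p * ((k+1)) = bin (k+l) k p * k := by
        apply mul_right_cancel₀ hl0.ne'
        linear_combination ((k+l:ℕ):ℝ) * r - bin (k+l) (k+1) p * (k+1) * e2 + bin (k+l) k p * l * e1
      simp
      by_contra hcon
      push Not at hcon
      nlinarith
    | succ j ih =>
      intro hj
      have ih := ih (by omega)
      have hl0 : (0:ℝ) < l := by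
        have : 0 < l := by omega
        exact_mod_cast this
      have hqq : 0 < 1 - p := by rw [hq]; positivity
      have r1 := hrec (k+j+1) (by omega)
      have r2 := hrec (k-(j+1)) (by omega)
      have e1 : k - (j+1) + 1 = k - j := by omega
      rw [e1] at r2
      have e2 : ((k - (j+1) : ℕ):ℝ) = k - (j+1) := by rw [Nat.cast_sub (by omega)]; push_cast; ring
      rw [e2] at r2
      push_cast at r1
      have e3 : k + j + 1 + 1 = k + (j+1) + 1 := by ring
      rw [e3] at r1
      set a := bin (k+l) (k+(j+1)+1) p
      set b := bin (k+l) (k+j+1) p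
      set c := bin (k+l) (k-j) p
      set d := bin (k+l) (k-(j+1)) p
      have hb : 0 ≤ b := bin_nonneg _ _ hp0 hp1
      have hc : 0 ≤ c := bin_nonneg _ _ hp0 hp1
      have hjl : (j:ℝ) + 1 < l := by exact_mod_cast hj
      have hA : 0 < ((k:ℝ)+j+2)*(1-p) := by positivity
      have hD : 0 < ((l:ℝ)+j+1)*p := by positivity
      have main : (((l:ℝ)-j-1)*p) * (((l:ℝ)+j+1)*p) ≤ (((k:ℝ)-j)*(1-p)) * (((k:ℝ)+j+2)*(1-p)) := by
        rw [hq, hp]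
        have : 0 < ((k+l:ℕ):ℝ) := hn'
        have e : ∀ u v w z N : ℝ, (u * (v / N)) * (w * (z/N)) = (u*v*w*z)/(N*N) := by
          intros; field_simp
        rw [e, e]
        apply div_le_div_of_nonneg_right _ (by positivity)
        have h1 : 0 ≤ ((j:ℝ)+1)^2 * (k^2 - l^2) := by
          apply mul_nonneg (by positivity); nlinarith
        have h2 : 0 ≤ (l:ℝ)^2 * (2*k+1) := by positivity
        nlinarith
      have ea : a * (((k:ℝ)+j+2)*(1-p)) = b * (((l:ℝ)-j-1)*p) := by linear_combination r1
      have ed : d * (((l:ℝ)+j+1)*p) = c * (((k:ℝ)-j)*(1-p)) := by linear_combination -r2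
      have : a * ((((k:ℝ)+j+2)*(1-p)) * (((l:ℝ)+j+1)*p)) ≤ d * ((((k:ℝ)+j+2)*(1-p)) * (((l:ℝ)+j+1)*p)) := by
        calc _ = b * ((((l:ℝ)-j-1)*p) * (((l:ℝ)+j+1)*p)) := by linear_combination (((l:ℝ)+j+1)*p) * ea
          _ ≤ c * ((((k:ℝ)-j)*(1-p)) * (((k:ℝ)+j+2)*(1-p))) := by
            apply mul_le_mul ih main _ hc
            apply mul_nonneg _ hD.le
            apply mul_nonneg _ hp0
            linarith
          _ = _ := by linear_combination (-((k:ℝ)+j+2)*(1-p)) * ed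
      exact le_of_mul_le_mul_right this (by positivity)
  have tot := bin_sum (k+l) p
  have e : k + l + 1 = (k+1) + l := by ring
  rw [e, Finset.sum_range_add] at tot
  have h1 : ∑ x ∈ Finset.range l, bin (k+l) (k+1+x) p ≤ ∑ x ∈ Finset.range l, bin (k+l) (k-x) p := by
    apply Finset.sum_le_sum
    intro j hj
    have := key j (Finset.mem_range.1 hj)
    rwa [show k+1+j = k+j+1 by ring]
  have h2 : ∑ x ∈ Finset.range l, bin (k+l) (k-x) p ≤ ∑ x ∈ Finset.range (k+1), bin (k+l) (k-x) p := by
    apply Finset.sum_le_sum_of_subset_of_nonneg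
    · intro i; simp; omega
    · intros; exact bin_nonneg _ _ hp0 hp1
  have h3 : ∑ x ∈ Finset.range (k+1), bin (k+l) (k-x) p = bcdf (k+l) k p := by
    have := Finset.sum_range_reflect (fun i => bin (k+l) i p) (k+1)
    simpa [bcdf] using this
  change bcdf (k+l) k p + _ = 1 at tot
  linarith

lemma log_aux {p q s : ℝ} (hs : 0 ≤ s) (hsp : s < p) (hpq : p ≤ q) :
    q * (Real.log (q + s) - Real.log (q - s)) ≤ p * (Real.log (p + s) - Real.log (p - s)) := by
  have hp : 0 < p := by linarith
  have hq : 0 < q := by linarith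
  have aux : ∀ t : ℝ, 0 < t → s < t → HasSum (fun k : ℕ => t * ((2 : ℝ) * (1 / (2 * k + 1)) * (s/t) ^ (2 * k + 1)))
      (t * (Real.log (t+s) - Real.log (t-s))) := by
    intro t ht hst
    have h := Real.hasSum_log_sub_log_of_abs_lt_one (x := s/t) (by
      rw [abs_of_nonneg (by positivity), div_lt_one ht]; exact hst)
    have e : Real.log (1 + s/t) - Real.log (1 - s/t) = Real.log (t+s) - Real.log (t-s) := by
      have e1 : 1 + s/t = (t+s)/t := by field_simp
      have e2 : 1 - s/t = (t-s)/t := by field_simp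
      rw [e1, e2, Real.log_div (by linarith) ht.ne', Real.log_div (by linarith) ht.ne']
      ring
    rw [e] at h
    exact h.mul_left t
  refine hasSum_le ?_ (aux q hq (by linarith)) (aux p hp hsp)
  intro k
  have e : ∀ t : ℝ, 0 < t → t * ((2 : ℝ) * (1 / (2 * k + 1)) * (s/t) ^ (2 * k + 1)) =
      2 * s * (1 / (2 * k + 1)) * (s/t)^(2*k) := by
    intro t ht
    rw [pow_succ]; field_simp
  rw [e q hq, e p hp]
  gcongr

lemma pow_aux (k l : ℕ) (hk : 0 < k) (hkl : k ≤ l + 1) {N s : ℝ} (hN : N = k + l + 1)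
    (hs : 0 ≤ s) (hsp : s ≤ k / N) :
    (k / N - s) ^ k * ((l + 1) / N + s) ^ l ≤ (k / N + s) ^ k * ((l + 1) / N - s) ^ l := by
  have hk' : (0:ℝ) < k := by exact_mod_cast hk
  have hN0 : 0 < N := by rw [hN]; positivity
  have hkl' : (k:ℝ) ≤ l + 1 := by exact_mod_cast hkl
  have hpq : (k:ℝ) / N ≤ (l+1)/N := by gcongr
  rcases hsp.eq_or_lt with h | h
  · rw [← h, sub_self, zero_pow hk.ne', zero_mul]
    have : 0 ≤ ((l:ℝ)+1)/N - s := by linarith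
    positivity
  have L := log_aux hs h hpq
  set p := (k:ℝ)/N with hp
  set q := ((l:ℝ)+1)/N with hq
  have ekp : (k:ℝ) = N * p := by rw [hp]; field_simp
  have elq : (l:ℝ) = N * q - 1 := by rw [hq]; field_simp; ring
  have p1 : 0 < p - s := by linarith
  have p2 : 0 < p + s := by linarith
  have q1 : 0 < q - s := by linarith
  have q2 : 0 < q + s := by linarith
  rw [← Real.log_le_log_iff (by positivity) (by positivity),
    Real.log_mul (by positivity) (by positivity), Real.log_mul (by positivity) (by positivity),
    Real.log_pow, Real.log_pow, Real.log_pow, Real.log_pow, ekp, elq]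
  have hlog : Real.log (q - s) ≤ Real.log (q+s) := Real.log_le_log q1 (by linarith)
  have := mul_le_mul_of_nonneg_left L hN0.le
  nlinarith

lemma bcdf_small (n k : ℕ) (hk : k < n) (h2 : 2 * k ≤ n) (hk0 : 0 < k) :
    1 / 2 ≤ bcdf n k ((k : ℝ) / n) := by
  obtain ⟨l, rfl⟩ := Nat.exists_eq_add_of_lt hk
  have hN : ((k+l+1:ℕ):ℝ) = k + l + 1 := by push_cast; ring
  set N : ℝ := ((k+l+1:ℕ):ℝ) with hNdef
  have hk' : (0:ℝ) < k := by exact_mod_cast hk0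
  have hN0 : 0 < N := by rw [hN]; positivity
  set p := (k:ℝ)/N with hp
  have hp0 : 0 < p := by positivity
  have hq : 1 - p = (l+1)/N := by rw [hp]; field_simp; rw [hN]; ring
  have h2p : 2 * p ≤ 1 := by
    rw [hp, ← mul_div_assoc, div_le_one hN0]; rw [hN]; exact_mod_cast h2
  have hd : ∀ s, HasDerivAt (fun s => bcdf (k+l+1) k (p-s) + bcdf (k+l+1) k (p+s))
      (N * bin (k+l) k (p-s) - N * bin (k+l) k (p+s)) s := by
    intro s
    have h1 := (bcdf_deriv (k+l+1) k (p-s)).comp s ((hasDerivAt_id s).const_sub p)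
    have h2 := (bcdf_deriv (k+l+1) k (p+s)).comp s ((hasDerivAt_id s).const_add p)
    refine (h1.add h2).congr_deriv ?_
    simp only [Nat.add_sub_cancel]
    ring
  have anti : AntitoneOn (fun s => bcdf (k+l+1) k (p-s) + bcdf (k+l+1) k (p+s)) (Set.Icc 0 p) := by
    apply antitoneOn_of_deriv_nonpos (convex_Icc 0 p)
    · exact fun z _ => (hd z).continuousAt.continuousWithinAt
    · exact fun z _ => (hd z).differentiableAt.differentiableWithinAt
    · intro s hs
      rw [interior_Icc] at hs
      rw [(hd s).deriv]
      have := pow_aux k l hk0 (by omega) hN hs.1.le hs.2.le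
      rw [← hp, ← hq] at this
      have hb : bin (k+l) k (p-s) ≤ bin (k+l) k (p+s) := by
        rw [bin_eq, bin_eq, Nat.add_sub_cancel_left, mul_assoc, mul_assoc]
        apply mul_le_mul_of_nonneg_left _ (by positivity)
        rwa [show 1 - (p - s) = 1 - p + s by ring, show 1 - (p + s) = 1 - p - s by ring]
      have := mul_le_mul_of_nonneg_left hb hN0.le
      linarith
  have := anti ⟨le_rfl, hp0.le⟩ ⟨hp0.le, le_rfl⟩ hp0.le
  simp only [sub_self, sub_zero, add_zero] at this
  have h0 : bcdf (k+l+1) k 0 = 1 := by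
    simp [bcdf, bin, bernsteinPolynomial.eval_at_0]
  have h1 : 0 ≤ bcdf (k+l+1) k (p+p) :=
    Finset.sum_nonneg fun j _ => bin_nonneg _ _ (by linarith) (by linarith)
  linarith

lemma bcdf_half (n : ℕ) {x : ℝ} (h0 : 0 < x) (h1 : x < 1) :
    1 / 2 ≤ bcdf n ⌈x * n⌉₊ x := by
  set k := ⌈x * n⌉₊ with hk
  have hkn : k ≤ n := by
    apply Nat.ceil_le.2
    have : (0:ℝ) ≤ n := by positivity
    nlinarith
  rcases hkn.eq_or_lt with h | h
  · rw [h, bcdf, bin_sum]; norm_num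
  have hn : (0:ℝ) < n := by
    have : 0 < n := by omega
    exact_mod_cast this
  have hk0 : 0 < k := Nat.ceil_pos.2 (by positivity)
  have hle : x ≤ k / n := by rw [le_div_iff₀ hn]; exact Nat.le_ceil _
  refine le_trans ?_ (bcdf_anti n k h0.le hle (by rw [div_le_one hn]; exact_mod_cast hkn))
  rcases le_total n (2*k) with h2 | h2
  · exact bcdf_big n k hkn h2 (by omega)
  · exact bcdf_small n k h h2 hk0

end Median

section Prob

/-- Expectation of a nonnegative function. -/
noncomputable def EE {β : Type*} (P : PMF β) (h : β → ℝ≥0∞) : ℝ≥0∞ := ∑' a, P a * h a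

lemma EE_bind {β γ : Type*} (P : PMF β) (f : β → PMF γ) (h : γ → ℝ≥0∞) :
    EE (P.bind f) h = EE P fun a => EE (f a) h := by
  simp only [EE, PMF.bind_apply, ← ENNReal.tsum_mul_right, ← ENNReal.tsum_mul_left]
  rw [ENNReal.tsum_comm]
  simp only [mul_assoc]

lemma EE_pure {β : Type*} (b : β) (h : β → ℝ≥0∞) : EE (PMF.pure b) h = h b := by
  rw [EE, tsum_eq_single b]
  · simp
  · intro c hc; simp [PMF.pure_apply_of_ne _ _ hc]

lemma EE_map {β γ : Type*} (P : PMF β) (f : β → γ) (h : γ → ℝ≥0∞) :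
    EE (P.map f) h = EE P fun a => h (f a) := by
  rw [← PMF.bind_pure_comp, EE_bind]; simp [EE_pure]

lemma EE_const {β : Type*} (P : PMF β) (c : ℝ≥0∞) : EE P (fun _ => c) = c := by
  simp [EE, ENNReal.tsum_mul_right]

lemma EE_ext {β : Type*} {P Q : PMF β} (h : ∀ f, EE P f = EE Q f) : P = Q := by
  classical
  ext b
  have := h fun a => if a = b then 1 else 0
  simpa [EE] using this

lemma probEvent_eq {β : Type*} (P : PMF β) (E : Set β) :
    probEvent P E = EE P (E.indicator 1) := by
  classical
  rw [probEvent, PMF.toOuterMeasure_apply, EE]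
  congr 1; ext a
  by_cases h : a ∈ E <;> simp [h]

/-- The one-point extension operator. -/
noncomputable def TT {X : Type*} (p : PMF X) : Module.End ℝ≥0∞ (Multiset X → ℝ≥0∞) where
  toFun h s := ∑' x, p x * h (x ::ₘ s)
  map_add' f g := by ext s; simp [mul_add, ENNReal.tsum_add]
  map_smul' c f := by
    ext s
    simp only [Pi.smul_apply, smul_eq_mul, RingHom.id_apply, ← ENNReal.tsum_mul_left]
    congr 1; ext x; ring

lemma TT_apply {X : Type*} (p : PMF X) (h : Multiset X → ℝ≥0∞) (s : Multiset X) :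
    TT p h s = ∑' x, p x * h (x ::ₘ s) := rfl

lemma TT_commute {X : Type*} (p q : PMF X) : Commute (TT p) (TT q) := by
  refine LinearMap.ext fun h => funext fun s => ?_
  simp only [Module.End.mul_apply, TT_apply, ← ENNReal.tsum_mul_left]
  rw [ENNReal.tsum_comm]
  congr 1; ext x; congr 1; ext y
  rw [Multiset.cons_swap]; ring

lemma EE_iid {X : Type*} (p : PMF X) (n : ℕ) (h : Multiset X → ℝ≥0∞) (s : Multiset X) :
    EE (iid p n) (fun S => h (s + S)) = (TT p ^ n) h s := by
  induction n generalizing h with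
  | zero => simp [iid, EE_pure]
  | succ n ih =>
    rw [iid, EE_bind, pow_succ, Module.End.mul_apply, ← ih]
    congr 1; ext S
    rw [EE_map, TT_apply, EE]
    simp

lemma iid_card {X : Type*} (p : PMF X) (n : ℕ) (S : Multiset X) (h : S ∈ (iid p n).support) :
    Multiset.card S = n := by
  induction n generalizing S with
  | zero => simp [iid] at h; simp [h]
  | succ n ih =>
    rw [iid, PMF.mem_support_bind_iff] at h
    obtain ⟨T, hT, h⟩ := h
    rw [PMF.mem_support_map_iff] at h
    obtain ⟨x, -, rfl⟩ := h
    simp [ih T hT]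

lemma disint {α β : Type*} (J : PMF (α × β)) (d : α → β) :
    ∃ K : α → PMF β, (J.map Prod.fst).bind K = J.map Prod.snd ∧
      ∀ a b, b ∈ (K a).support → (a, b) ∈ J.support ∨ b = d a := by
  classical
  let K : α → PMF β := fun a =>
    if h : ∃ z ∈ {z : α × β | z.1 = a}, z ∈ J.support then (J.filter _ h).map Prod.snd
    else PMF.pure (d a)
  have hmass : ∀ a, (J.map Prod.fst) a = ∑' z, Set.indicator {z : α × β | z.1 = a} J z := by
    intro a
    rw [PMF.map_apply]
    congr 1; ext z
    simp [Set.indicator_apply, eq_comm]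
  refine ⟨K, ?_, ?_⟩
  · apply EE_ext
    intro f
    rw [EE_bind, EE_map J Prod.snd]
    have hK : ∀ a, (J.map Prod.fst) a * EE (K a) f =
        ∑' z, Set.indicator {z : α × β | z.1 = a} J z * f z.2 := by
      intro a
      by_cases h : ∃ z ∈ {z : α × β | z.1 = a}, z ∈ J.support
      · simp only [K, dif_pos h]
        rw [EE_map, EE, hmass]
        simp only [PMF.filter_apply]
        set M := ∑' z, Set.indicator {z : α × β | z.1 = a} J z with hM
        have hM0 : M ≠ 0 := by
          obtain ⟨z, hz, hzJ⟩ := h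
          intro h0
          rw [hM, ENNReal.tsum_eq_zero] at h0
          have := h0 z
          rw [Set.indicator_of_mem hz] at this
          exact hzJ this
        have hMt : M ≠ ∞ := by
          rw [hM, ← hmass]; exact PMF.apply_ne_top _ _
        rw [← ENNReal.tsum_mul_left]
        congr 1; ext z
        calc M * (Set.indicator {z : α × β | z.1 = a} J z * M⁻¹ * f z.2)
            = (M * M⁻¹) * (Set.indicator {z : α × β | z.1 = a} J z * f z.2) := by ring
          _ = _ := by rw [ENNReal.mul_inv_cancel hM0 hMt, one_mul]
      · have h0 : ∀ z, Set.indicator {z : α × β | z.1 = a} J z = 0 := by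
          intro z
          by_contra hz
          apply h
          refine ⟨z, Set.mem_of_indicator_ne_zero hz, ?_⟩
          intro hJ
          apply hz
          simp [Set.indicator_apply, hJ]
        rw [hmass]; simp [h0]
    change ∑' a, (J.map Prod.fst) a * EE (K a) f = ∑' z, J z * f z.2
    simp only [hK]
    rw [ENNReal.tsum_comm]
    congr 1; ext z
    rw [tsum_eq_single z.1]
    · simp
    · intro a ha
      simp [Set.indicator_apply, Ne.symm ha]
  · intro a b hb
    by_cases h : ∃ z ∈ {z : α × β | z.1 = a}, z ∈ J.support
    · simp only [K, dif_pos h, PMF.mem_support_map_iff, PMF.support_filter] at hb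
      obtain ⟨⟨a', b'⟩, ⟨rfl, hz⟩, rfl⟩ := hb
      exact Or.inl hz
    · simp only [K, dif_neg h, PMF.support_pure] at hb
      exact Or.inr hb

/-- The binomial distribution on `ℕ`. -/
noncomputable def binPMF (n : ℕ) (x : ℝ) (h0 : 0 ≤ x) (h1 : x ≤ 1) : PMF ℕ :=
  PMF.ofFinset (fun j => ENNReal.ofReal (bin n j x)) (Finset.range (n + 1))
    (by
      rw [← ENNReal.ofReal_sum_of_nonneg fun j _ => bin_nonneg n j h0 h1, bin_sum]; simp)
    (by
      intro j hj
      have : n < j := by simpa using hj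
      simp [bin_eq, Nat.choose_eq_zero_of_lt this])

lemma binPMF_apply (n : ℕ) (x : ℝ) (h0 : 0 ≤ x) (h1 : x ≤ 1) (j : ℕ) :
    binPMF n x h0 h1 j = ENNReal.ofReal (bin n j x) := rfl

/-- The sample decomposition. -/
lemma iid_mix {X : Type*} (p v r : PMF X) (η : ℝ) (h0 : 0 ≤ η) (h1 : η ≤ 1)
    (hp : ∀ x, p x = ENNReal.ofReal (1 - η) * v x + ENNReal.ofReal η * r x) (m : ℕ)
    (h : Multiset X → ℝ≥0∞) :
    EE (iid p m) h = EE (binPMF m η h0 h1) fun j => (TT v ^ (m - j)) ((TT r ^ j) h) 0 := by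
  have hT : TT p = ENNReal.ofReal η • TT r + ENNReal.ofReal (1 - η) • TT v := by
    refine LinearMap.ext fun h => funext fun s => ?_
    simp only [LinearMap.add_apply, LinearMap.smul_apply, Pi.add_apply, Pi.smul_apply, TT_apply,
      smul_eq_mul, ← ENNReal.tsum_mul_left, ← ENNReal.tsum_add]
    congr 1; ext x; rw [hp]; ring
  have e := EE_iid p m h 0
  simp only [zero_add] at e
  have hc : Commute (ENNReal.ofReal η • TT r) (ENNReal.ofReal (1 - η) • TT v) :=
    ((TT_commute r v).smul_left _).smul_right _
  rw [e, hT, hc.add_pow, EE, tsum_eq_sum (s := Finset.range (m + 1))]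
  · simp only [LinearMap.sum_apply, Finset.sum_apply]
    apply Finset.sum_congr rfl
    intro j hj
    have h1' : 0 ≤ 1 - η := by linarith
    have hb : ENNReal.ofReal (bin m j η) =
        m.choose j * ENNReal.ofReal η ^ j * ENNReal.ofReal (1 - η) ^ (m - j) := by
      rw [bin_eq, ENNReal.ofReal_mul (by positivity), ENNReal.ofReal_mul (by positivity),
        ENNReal.ofReal_pow h0, ENNReal.ofReal_pow h1', ENNReal.ofReal_natCast]
    have hcc : TT r ^ j * TT v ^ (m - j) = TT v ^ (m - j) * TT r ^ j :=
      ((TT_commute r v).pow_pow _ _).eq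
    rw [binPMF_apply, hb, smul_pow, smul_pow, smul_mul_smul_comm, hcc, ← nsmul_eq_mul',
      LinearMap.smul_apply, LinearMap.smul_apply, Module.End.mul_apply]
    simp only [Pi.smul_apply, smul_eq_mul, nsmul_eq_mul]
    ring
  · intro j hj
    have : m < j := by simpa using hj
    simp [binPMF_apply, bin_eq, Nat.choose_eq_zero_of_lt this]

/-- Joint law of sample and corrupted sample. -/
noncomputable def joint {X : Type*} (v r : PMF X) (b : PMF ℕ) (m k : ℕ)
    (sub : Multiset X → Multiset X) : PMF (Multiset X × Multiset X) :=
  b.bind fun j =>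
    if j ≤ k then
      (iid v (m - k)).bind fun T => (iid v (k - j)).bind fun G =>
        (iid r j).map fun B => (T + G + B, T)
    else
      (iid v (m - j)).bind fun G => (iid r j).map fun B => (G + B, sub (G + B))

lemma joint_fst {X : Type*} (p v r : PMF X) (η : ℝ) (h0 : 0 ≤ η) (h1 : η ≤ 1)
    (hp : ∀ x, p x = ENNReal.ofReal (1 - η) * v x + ENNReal.ofReal η * r x) (m k : ℕ) (hk : k ≤ m)
    (sub : Multiset X → Multiset X) :
    (joint v r (binPMF m η h0 h1) m k sub).map Prod.fst = iid p m := by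
  apply EE_ext
  intro h
  rw [iid_mix p v r η h0 h1 hp, EE_map, joint, EE_bind]
  congr 1; ext j
  split_ifs with hj
  · simp only [EE_bind, EE_map, EE_iid]
    have e := EE_iid v (m - k) ((TT v ^ (k - j)) ((TT r ^ j) h)) 0
    simp only [zero_add] at e
    rw [e, ← Module.End.mul_apply, ← pow_add,
      show m - k + (k - j) = m - j by omega]
  · simp only [EE_bind, EE_map, EE_iid]
    have e := EE_iid v (m - j) ((TT r ^ j) h) 0
    simp only [zero_add] at e
    rw [e]

end Prob

theorem stmt15 {X : Type*} [Countable X] (Vobl : PMF X → PMF X) (η : ℝ)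
    (hη : η ∈ Set.Ioo (0 : ℝ) 1)
    (hsub : ∀ p : PMF X, ∃ r : PMF X, ∀ x,
      p x = ENNReal.ofReal (1 - η) * Vobl p x + ENNReal.ofReal η * r x)
    (α : ℝ) (hα : 1 ≤ α) (ε δ : ℝ)
    (hε : ε ∈ Set.Ioo (0 : ℝ) 1) (hδ : δ ∈ Set.Ioo (0 : ℝ) 1)
    (m : ℕ) (A : Multiset X → PMF X) (p : PMF X)
    (hfail : ENNReal.ofReal δ <
      probEvent (iid (Vobl p) (m - ⌈η * m⌉₊)) {S | α * η + ε < tv (A S) p}) :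
    ∃ Vadp : Multiset X → PMF X → PMF (Multiset X),
      (∀ S q T, T ∈ (Vadp S q).support → T ≤ S) ∧
      (∀ S : Multiset X, Multiset.card S = m → ∀ T ∈ (Vadp S p).support,
        Multiset.card T = m - ⌈η * m⌉₊) ∧
      ENNReal.ofReal (δ / 2) <
        probEvent ((iid p m).bind fun S => Vadp S p) {T | α * η + ε < tv (A T) p} := by
  classical
  obtain ⟨r, hr⟩ := hsub p
  have h0 : 0 ≤ η := hη.1.le
  have h1 : η ≤ 1 := hη.2.le
  have hhalf := bcdf_half m hη.1 hη.2
  set k := ⌈η * m⌉₊ with hkdef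
  have hk : k ≤ m := by
    apply Nat.ceil_le.2
    have : (0:ℝ) ≤ m := by positivity
    nlinarith
  set v := Vobl p with hv
  have hex : ∀ S : Multiset X, ∃ T ≤ S, m - k ≤ Multiset.card S → Multiset.card T = m - k := by
    intro S
    refine ⟨(S.toList.take (m - k) : Multiset X), ?_, ?_⟩
    · conv_rhs => rw [← Multiset.coe_toList S]
      exact (List.take_sublist _ _).subperm
    · intro h; simp [h]
  choose sub hsub1 hsub2 using hex
  set J := joint v r (binPMF m η h0 h1) m k sub with hJ
  have hfst : J.map Prod.fst = iid p m := joint_fst p v r η h0 h1 hr m k hk sub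
  have hJs : ∀ S T, (S, T) ∈ J.support → T ≤ S ∧ Multiset.card T = m - k := by
    intro S T h
    have hS : Multiset.card S = m := by
      apply iid_card p m
      rw [← hfst, PMF.mem_support_map_iff]
      exact ⟨_, h, rfl⟩
    rw [hJ, joint, PMF.mem_support_bind_iff] at h
    obtain ⟨j, -, h⟩ := h
    split_ifs at h with hj
    · simp only [PMF.mem_support_bind_iff, PMF.mem_support_map_iff, Prod.mk.injEq] at h
      obtain ⟨T', hT', G, hG, B, hB, hSe, rfl⟩ := h
      refine ⟨?_, iid_card _ _ _ hT'⟩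
      rw [← hSe, add_assoc]
      exact Multiset.le_add_right _ _
    · simp only [PMF.mem_support_bind_iff, PMF.mem_support_map_iff, Prod.mk.injEq] at h
      obtain ⟨G, hG, B, hB, rfl, rfl⟩ := h
      exact ⟨hsub1 _, hsub2 _ (by omega)⟩
  obtain ⟨K, hK, hKs⟩ := disint J sub
  refine ⟨fun S _ => K S, ?_, ?_, ?_⟩
  · intro S q T hT
    rcases hKs S T hT with h | rfl
    · exact (hJs S T h).1
    · exact hsub1 S
  · intro S hS T hT
    rcases hKs S T hT with h | rfl
    · exact (hJs S T h).2
    · exact hsub2 S (by omega)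
  · set E : Set (Multiset X) := {T | α * η + ε < tv (A T) p} with hE
    change _ < probEvent ((iid p m).bind K) E
    rw [← hfst, hK, probEvent_eq, EE_map, hJ, joint, EE_bind]
    rw [probEvent_eq] at hfail
    set Q := EE (iid v (m - k)) (E.indicator 1) with hQ
    have hhalf' : (2:ℝ≥0∞)⁻¹ ≤ ∑ j ∈ Finset.range (k + 1), binPMF m η h0 h1 j := by
      simp only [binPMF_apply]
      rw [← ENNReal.ofReal_sum_of_nonneg fun j _ => bin_nonneg m j h0 h1]
      have e : (2:ℝ≥0∞)⁻¹ = ENNReal.ofReal (1/2) := by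
        rw [one_div, ENNReal.ofReal_inv_of_pos (by norm_num)]; simp
      rw [e]
      exact ENNReal.ofReal_le_ofReal hhalf
    have hlow : (2:ℝ≥0∞)⁻¹ * Q ≤ EE (binPMF m η h0 h1) fun j => EE (if j ≤ k then
      (iid v (m - k)).bind fun T => (iid v (k - j)).bind fun G =>
        (iid r j).map fun B => (T + G + B, T)
      else
      (iid v (m - j)).bind fun G => (iid r j).map fun B => (G + B, sub (G + B)))
        (fun a => E.indicator 1 a.2) := by
      calc (2:ℝ≥0∞)⁻¹ * Q ≤ (∑ j ∈ Finset.range (k + 1), binPMF m η h0 h1 j) * Q := by gcongr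
        _ = ∑ j ∈ Finset.range (k + 1), binPMF m η h0 h1 j * Q := by rw [Finset.sum_mul]
        _ ≤ _ := by
          rw [EE]
          refine le_trans (le_of_eq ?_) (ENNReal.sum_le_tsum (Finset.range (k + 1)))
          apply Finset.sum_congr rfl
          intro j hj
          have hj : j ≤ k := by simpa [Nat.lt_succ_iff] using hj
          rw [if_pos hj]
          simp only [EE_bind, EE_map, EE_const]
          rfl
    refine lt_of_lt_of_le ?_ hlow
    have e : ENNReal.ofReal (δ / 2) = (2:ℝ≥0∞)⁻¹ * ENNReal.ofReal δ := by
      rw [div_eq_inv_mul, ENNReal.ofReal_mul (by norm_num),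
        ENNReal.ofReal_inv_of_pos (by norm_num)]; simp
    rw [e]
    exact ENNReal.mul_lt_mul_right (by simp) (by simp) hfail
end
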